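/- Let T ∈ (0,1). If Z(T) = ∑_{p ∈ dom U} 2^{−|p|/T} is a right-computable real number, then T is weakly Chaitin T-random, i.e., there exists c ∈ ℝ such that T·n − c ≤ H(T_n) for all n ≥ 1. -/

import Mathlib

open Filter

/-- A set of finite binary strings is prefix-free if no element of it is a
prefix of another (distinct) element of it. -/
def PrefixFree (S : Set (List Bool)) : Prop :=
  ∀ p ∈ S, ∀ q ∈ S, p <+: q → p = q

/-- A computer: a partial recursive function from finite binary strings to
finite binary strings whose domain is a prefix-free set. -/
structure Computer where
  f : List Bool →. List Bool
  partrec : Partrec f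
  prefixFree : PrefixFree {p | (f p).Dom}

/-- The domain of a computer. -/
def Computer.domain (C : Computer) : Set (List Bool) := {p | (C.f p).Dom}

/-- A computer `U` is optimal if every computer can be simulated on `U` with
only a constant increase in program length. -/
def IsOptimal (U : Computer) : Prop :=
  ∀ C : Computer, ∃ d : ℕ, ∀ p : List Bool, (C.f p).Dom →
    ∃ p' : List Bool, p'.length ≤ p.length + d ∧ ∀ s, s ∈ C.f p → s ∈ U.f p'

/-- Program-size complexity `H(s)`: the minimal length of a program `p`
with `U(p) = s`. -/
noncomputable def H (U : Computer) (s : List Bool) : ℕ :=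
  sInf {n | ∃ p : List Bool, p.length = n ∧ s ∈ U.f p}

/-- The `n`-th bit (`n ≥ 1`) of the base-two expansion of `x mod 1`
(the expansion chosen with infinitely many zeros). -/
noncomputable def binDigit (x : ℝ) (n : ℕ) : Bool :=
  decide (⌊Int.fract x * 2 ^ n⌋ % 2 = 1)

/-- The first `n` bits of the base-two expansion of `x mod 1` (with
infinitely many zeros). -/
noncomputable def bits (x : ℝ) (n : ℕ) : List Bool :=
  (List.range n).map fun i => binDigit x (i + 1)

/-- A real `x` is weakly Chaitin `D`-random (w.r.t. the computer `U`). -/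
def WeaklyChaitinRandom (U : Computer) (D x : ℝ) : Prop :=
  ∃ c : ℝ, ∀ n : ℕ, 1 ≤ n → D * n - c ≤ (H U (bits x n) : ℝ)

/-- A real `x` is Chaitin `D`-random (w.r.t. the computer `U`). -/
def ChaitinRandom (U : Computer) (D x : ℝ) : Prop :=
  Tendsto (fun n : ℕ => (H U (bits x n) : ℝ) - D * n) atTop atTop

/-- A real `x` is `D`-compressible (w.r.t. the computer `U`). -/
def DCompressible (U : Computer) (D x : ℝ) : Prop :=
  Filter.limsup (fun n : ℕ => (H U (bits x n) : ℝ) / n) atTop ≤ D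

/-- A computable real number. -/
def ComputableReal (T : ℝ) : Prop :=
  ∃ f : ℕ → ℚ, Computable f ∧ ∀ n : ℕ, 1 ≤ n → |T - (f n : ℝ)| < 1 / n

/-- A right-computable real number. -/
def RightComputable (T : ℝ) : Prop :=
  ∃ g : ℕ → ℚ, Computable g ∧ (∀ n, T ≤ (g n : ℝ)) ∧
    Tendsto (fun n => ((g n : ℚ) : ℝ)) atTop (nhds T)

/-- A left-computable real number. -/
def LeftComputable (T : ℝ) : Prop := RightComputable (-T)

/-- The term `2 ^ (-|p| / T)` of the partition function `Z(T)`. -/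
noncomputable def zterm (U : Computer) (T : ℝ) (p : U.domain) : ℝ :=
  (2 : ℝ) ^ (-((p : List Bool).length : ℝ) / T)

/-- The term `|p| ^ Q * 2 ^ (-|p| / T)` of `W(Q,T)`. -/
noncomputable def wterm (U : Computer) (Q T : ℝ) (p : U.domain) : ℝ :=
  ((p : List Bool).length : ℝ) ^ Q * (2 : ℝ) ^ (-((p : List Bool).length : ℝ) / T)

/-- The term `|p| * 2 ^ (-|p| / T)` of `W(1,T)`. -/
noncomputable def wlterm (U : Computer) (T : ℝ) (p : U.domain) : ℝ :=
  ((p : List Bool).length : ℝ) * (2 : ℝ) ^ (-((p : List Bool).length : ℝ) / T)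

/-- The term `|p| ^ 2 * 2 ^ (-|p| / T)` of `W(2,T)`. -/
noncomputable def wsqterm (U : Computer) (T : ℝ) (p : U.domain) : ℝ :=
  ((p : List Bool).length : ℝ) ^ 2 * (2 : ℝ) ^ (-((p : List Bool).length : ℝ) / T)

/-- A lower-computable function `f : ℕ⁺ → [0,∞)` (represented on `ℕ`,
with all conditions imposed on positive arguments). -/
def LowerComputableFun (f : ℕ → ℝ) : Prop :=
  ∃ a : ℕ → ℕ → ℚ, Computable₂ a ∧
    (∀ k n : ℕ, 1 ≤ k → 1 ≤ n → (a k n : ℝ) ≤ f n) ∧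
    (∀ n : ℕ, 1 ≤ n → Tendsto (fun k => ((a k n : ℚ) : ℝ)) atTop (nhds (f n)))

/-- A lower-computable semi-measure on finite binary strings. -/
def LowerComputableSemiMeasure (r : List Bool → ℝ) : Prop :=
  (∀ s, 0 ≤ r s) ∧ (∀ s, r s ≤ 1) ∧ Summable r ∧ (∑' s, r s) ≤ 1 ∧
    ∃ f : ℕ → List Bool → ℚ, Computable₂ f ∧
      (∀ n s, ((f n s : ℚ) : ℝ) ≤ r s) ∧
      (∀ s, Tendsto (fun n => ((f n s : ℚ) : ℝ)) atTop (nhds (r s)))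

/-- A universal probability. -/
def UniversalProbability (m : List Bool → ℝ) : Prop :=
  LowerComputableSemiMeasure m ∧
    ∀ r : List Bool → ℝ, LowerComputableSemiMeasure r →
      ∃ c : ℝ, 0 < c ∧ ∀ s, c * r s ≤ m s


theorem pr_sum {α : Type*} [Primcodable α] {f : α → ℕ → ℕ} {g : α → ℕ}
    (hf : Primrec₂ f) (hg : Primrec g) :
    Primrec (fun a => ∑ i ∈ Finset.range (g a), f a i) := by
  have := Primrec.nat_rec' (f := g) (g := fun _ : α => (0:ℕ))
    (h := fun a (p : ℕ × ℕ) => p.2 + f a p.1) hg (Primrec.const 0)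
    (Primrec.nat_add.comp (Primrec.snd.comp Primrec.snd)
      (hf.comp Primrec.fst (Primrec.fst.comp Primrec.snd)))
  refine this.of_eq fun a => ?_
  induction g a with
  | zero => simp
  | succ n ih => rw [Finset.sum_range_succ, ← ih]

theorem pr_pow : Primrec₂ ((· ^ ·) : ℕ → ℕ → ℕ) :=
  Primrec₂.unpaired'.1 Nat.Primrec.pow

/-- Code `c` (as a pair) is in the range of the encoding of rationals. -/
def rvalid (c : ℕ) : Prop :=
  1 ≤ c.unpair.2 ∧ (∑ e ∈ Finset.range c.unpair.2,
    if ((c.unpair.1 + 1) / 2) % (e + 2) = 0 ∧ c.unpair.2 % (e + 2) = 0 then 1 else 0) = 0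

instance : DecidablePred rvalid := fun c => by unfold rvalid; infer_instance

theorem pr_rvalid : PrimrecPred rvalid := by
  have h2 : Primrec (fun c : ℕ => c.unpair.2) := Primrec.snd.comp Primrec.unpair
  have h1 : Primrec (fun c : ℕ => (c.unpair.1 + 1) / 2) :=
    Primrec.nat_div.comp (Primrec.nat_add.comp (Primrec.fst.comp Primrec.unpair) (Primrec.const 1))
      (Primrec.const 2)
  have he : Primrec (fun p : ℕ × ℕ => p.2 + 2) := Primrec.nat_add.comp Primrec.snd (Primrec.const 2)
  refine PrimrecPred.and (Primrec.nat_le.comp (Primrec.const 1) h2) ?_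
  refine Primrec.eq.comp (pr_sum (f := fun c e =>
    if ((c.unpair.1 + 1) / 2) % (e + 2) = 0 ∧ c.unpair.2 % (e + 2) = 0 then 1 else 0) ?_ h2)
    (Primrec.const 0)
  refine Primrec.ite (PrimrecPred.and ?_ ?_) (Primrec.const 1) (Primrec.const 0)
  · exact Primrec.eq.comp (Primrec.nat_mod.comp (h1.comp Primrec.fst) he) (Primrec.const 0)
  · exact Primrec.eq.comp (Primrec.nat_mod.comp (h2.comp Primrec.fst) he) (Primrec.const 0)

theorem rvalid_iff (c : ℕ) :
    rvalid c ↔ 0 < c.unpair.2 ∧ Nat.Coprime ((c.unpair.1 + 1) / 2) c.unpair.2 := by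
  unfold rvalid
  refine and_congr_right fun hpos => ?_
  rw [Finset.sum_eq_zero_iff]
  constructor
  · intro h
    by_contra hc
    obtain ⟨p, hp, h1, h2⟩ := Nat.Prime.not_coprime_iff_dvd.1 hc
    have hle := Nat.le_of_dvd hpos h2
    have := h (p - 2) (by have := hp.two_le; simp; omega)
    rw [Nat.sub_add_cancel hp.two_le] at this
    simp [Nat.mod_eq_zero_of_dvd h1, Nat.mod_eq_zero_of_dvd h2] at this
  · intro h e _
    rw [if_neg]
    rintro ⟨h1, h2⟩
    have := Nat.dvd_gcd (Nat.dvd_of_mod_eq_zero h1) (Nat.dvd_of_mod_eq_zero h2)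
    rw [h] at this
    have := Nat.le_of_dvd one_pos this
    omega

def ridx (c : ℕ) : ℕ := ∑ i ∈ Finset.range c, if rvalid i then 1 else 0

theorem pr_ridx : Primrec ridx := by
  refine pr_sum (α := ℕ) (f := fun _ i => if rvalid i then 1 else 0) (g := fun c => c) ?_ Primrec.id
  exact Primrec.ite (pr_rvalid.comp Primrec.snd) (Primrec.const 1) (Primrec.const 0)

theorem rat_enc0 (q : ℚ) : @Encodable.encode ℚ Rat.instEncodable q
    = Nat.pair (Encodable.encode q.num) q.den := rfl

theorem int_enc (z : ℤ) : (Encodable.encode z + 1) / 2 = z.natAbs := by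
  cases z with
  | ofNat n => change (2 * n + 1)/2 = _; simp; omega
  | negSucc n => change (2 * n + 1 + 1)/2 = _; simp; omega

theorem rvalid_enc (c : ℕ) : rvalid c ↔ c ∈ Set.range (@Encodable.encode ℚ Rat.instEncodable) := by
  rw [rvalid_iff]
  constructor
  · rintro ⟨h1, h2⟩
    set z : ℤ := (Encodable.decode (α := ℤ) c.unpair.1).getD 0 with hz
    have hze : Encodable.encode z = c.unpair.1 := by
      rw [hz, Denumerable.decode_eq_ofNat]; exact Denumerable.encode_ofNat (α := ℤ) _
    refine ⟨⟨z, c.unpair.2, h1.ne', ?_⟩, ?_⟩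
    · rw [← hze, int_enc] at h2; exact h2
    · rw [rat_enc0]; simp only; rw [hze, Nat.pair_unpair]
  · rintro ⟨q, rfl⟩
    rw [rat_enc0]
    simp only [Nat.unpair_pair, int_enc]
    exact ⟨q.pos, q.reduced⟩


theorem rat_enc (q : ℚ) : @Encodable.encode ℚ Primcodable.toEncodable q
    = ridx (Nat.pair (Encodable.encode q.num) q.den) := by
  rw [← rat_enc0]
  have : @Encodable.encode ℚ Primcodable.toEncodable q =
      (List.range (@Encodable.encode ℚ Rat.instEncodable q)).countP
      (fun c => @decide (c ∈ Set.range (@Encodable.encode ℚ Rat.instEncodable))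
        (Encodable.decidableRangeEncode ℚ c)) := by
    rfl
  rw [this, ridx]
  generalize @Encodable.encode ℚ Rat.instEncodable q = n
  induction n with
  | zero => simp
  | succ n ih =>
    rw [List.range_succ, List.countP_append, ih, Finset.sum_range_succ]
    congr 1
    by_cases h : rvalid n
    · have h' := (rvalid_enc n).1 h
      simp only [List.countP_singleton, h, h', decide_true, if_true]
    · have h' := fun h' => h ((rvalid_enc n).2 h')
      simp only [List.countP_singleton, h, if_false]
      rw [if_neg]
      simpa using h'

theorem rat_enc_inj (q : ℚ) (z d : ℕ) (hv : rvalid (Nat.pair (2 * z) d))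
    (h : ridx (Nat.pair (2 * z) d) = @Encodable.encode ℚ Primcodable.toEncodable q) :
    0 < d ∧ (q : ℝ) = z / d := by
  rw [rvalid_iff] at hv
  simp only [Nat.unpair_pair] at hv
  have hc : Nat.Coprime (z : ℤ).natAbs d := by
    have := hv.2
    rwa [show (2 * z + 1) / 2 = z by omega] at this
  have h2 : @Encodable.encode ℚ Primcodable.toEncodable (⟨z, d, hv.1.ne', hc⟩ : ℚ) =
      @Encodable.encode ℚ Primcodable.toEncodable q := by
    rw [rat_enc, ← h]; rfl
  have h3 := @Encodable.encode_injective ℚ Primcodable.toEncodable _ _ h2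
  refine ⟨hv.1, ?_⟩
  rw [← h3, Rat.cast_def]
  simp

theorem rat_enc_ex (q : ℚ) (hq : 0 ≤ q) : ∃ z d : ℕ, rvalid (Nat.pair (2 * z) d) ∧
    ridx (Nat.pair (2 * z) d) = @Encodable.encode ℚ Primcodable.toEncodable q := by
  have hz : Encodable.encode q.num = 2 * q.num.toNat := by
    have : ((q.num.toNat : ℕ) : ℤ) = q.num := Int.toNat_of_nonneg (Rat.num_nonneg.2 hq)
    conv_lhs => rw [← this]
    rfl
  refine ⟨q.num.toNat, q.den, ?_, ?_⟩
  · rw [rvalid_enc]; exact ⟨q, by rw [rat_enc0, hz]⟩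
  · rw [rat_enc, hz]

/-- The program with code `i` (default: empty). -/
def prg (i : ℕ) : List Bool := (Encodable.decode₂ (List Bool) i).getD []

def bval (b : List Bool) : ℕ := b.foldl (fun v x => 2 * v + (if x = true then 1 else 0)) 0

open Nat.Partrec in
def good (cd : Code) (k i : ℕ) : Prop :=
  (Encodable.decode₂ (List Bool) i).isSome = true ∧ (Code.evaln k cd i).isSome = true

instance (cd : Nat.Partrec.Code) (k i : ℕ) : Decidable (good cd k i) := by
  unfold good; infer_instance

/-- floor of `2^j * 2^(-l*2^n/a)`. -/
def apx (j a n l : ℕ) : ℕ :=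
  ∑ N ∈ Finset.range (2 ^ j), if (N + 1) ^ a * 2 ^ (l * 2 ^ n) ≤ 2 ^ (j * a) then 1 else 0

def asum (cd : Nat.Partrec.Code) (k j a n : ℕ) : ℕ :=
  ∑ i ∈ Finset.range k, if good cd k i then apx j a n (prg i).length else 0

def outlen (cd : Nat.Partrec.Code) (k i : ℕ) : ℕ :=
  ((Encodable.decode (α := List Bool) ((Nat.Partrec.Code.evaln k cd i).getD 0)).getD []).length

def fresh (cd : Nat.Partrec.Code) (k : ℕ) : List Bool :=
  (List.range (1 + ∑ i ∈ Finset.range k, outlen cd k i)).map (fun _ => true)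

def chk (cd : Nat.Partrec.Code) (k j z d a n e : ℕ) : Option (List Bool) :=
  if (rvalid (Nat.pair (2 * z) d) ∧ ridx (Nat.pair (2 * z) d) = e) ∧
    2 ^ j * z < d * asum cd k j a n then some (fresh cd k) else none

section
variable {α : Type*} [Primcodable α]

theorem pr_prg : Primrec prg :=
  Primrec.option_getD.comp Primrec.decode₂ (Primrec.const [])

theorem pr_bval : Primrec bval := by
  refine Primrec.list_foldl Primrec.id (Primrec.const 0)
    (h := fun (_ : List Bool) (p : ℕ × Bool) => 2 * p.1 + (if p.2 = true then 1 else 0)) ?_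
  refine Primrec.nat_add.comp (Primrec.nat_mul.comp (Primrec.const 2)
    (Primrec.fst.comp Primrec.snd)) ?_
  exact Primrec.ite (Primrec.eq.comp (Primrec.snd.comp Primrec.snd) (Primrec.const true))
    (Primrec.const 1) (Primrec.const 0)

theorem pr_evaln (cd : Nat.Partrec.Code) {k i : α → ℕ} (hk : Primrec k) (hi : Primrec i) :
    Primrec (fun x => Nat.Partrec.Code.evaln (k x) cd (i x)) :=
  Nat.Partrec.Code.primrec_evaln.comp
    (Primrec.pair (Primrec.pair hk (Primrec.const cd)) hi)

theorem pr_good (cd : Nat.Partrec.Code) {k i : α → ℕ} (hk : Primrec k) (hi : Primrec i) :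
    PrimrecPred (fun x => good cd (k x) (i x)) := by
  refine PrimrecPred.and ?_ ?_
  · exact Primrec.eq.comp (Primrec.option_isSome.comp (Primrec.decode₂.comp hi)) (Primrec.const true)
  · exact Primrec.eq.comp (Primrec.option_isSome.comp (pr_evaln cd hk hi)) (Primrec.const true)

theorem pr_apx {j a n l : α → ℕ} (hj : Primrec j) (ha : Primrec a) (hn : Primrec n)
    (hl : Primrec l) : Primrec (fun x => apx (j x) (a x) (n x) (l x)) := by
  have F : Primrec (Prod.fst : α × ℕ → α) := Primrec.fst
  refine pr_sum (f := fun x N => if (N + 1) ^ (a x) * 2 ^ (l x * 2 ^ n x) ≤ 2 ^ (j x * a x)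
    then 1 else 0) ?_ (pr_pow.comp (Primrec.const 2) hj)
  refine Primrec.ite (Primrec.nat_le.comp ?_ ?_) (Primrec.const 1) (Primrec.const 0)
  · exact Primrec.nat_mul.comp (pr_pow.comp (Primrec.succ.comp Primrec.snd) (ha.comp F))
      (pr_pow.comp (Primrec.const 2) (Primrec.nat_mul.comp (hl.comp F)
        (pr_pow.comp (Primrec.const 2) (hn.comp F))))
  · exact pr_pow.comp (Primrec.const 2) (Primrec.nat_mul.comp (hj.comp F) (ha.comp F))

theorem pr_asum (cd : Nat.Partrec.Code) {k j a n : α → ℕ} (hk : Primrec k) (hj : Primrec j)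
    (ha : Primrec a) (hn : Primrec n) : Primrec (fun x => asum cd (k x) (j x) (a x) (n x)) := by
  have F : Primrec (Prod.fst : α × ℕ → α) := Primrec.fst
  refine pr_sum (f := fun x i => if good cd (k x) i then apx (j x) (a x) (n x) (prg i).length
    else 0) ?_ hk
  refine Primrec.ite (pr_good cd (hk.comp F) Primrec.snd) ?_ (Primrec.const 0)
  exact pr_apx (hj.comp F) (ha.comp F) (hn.comp F)
    (Primrec.list_length.comp (pr_prg.comp Primrec.snd))

theorem pr_fresh (cd : Nat.Partrec.Code) : Primrec (fresh cd) := by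
  refine Primrec.list_map (Primrec.list_range.comp (Primrec.nat_add.comp (Primrec.const 1)
    (pr_sum (f := fun k i => outlen cd k i) ?_ Primrec.id))) (Primrec.const true)
  refine Primrec.list_length.comp (Primrec.option_getD.comp (Primrec.decode.comp
    (Primrec.option_getD.comp (pr_evaln cd Primrec.fst Primrec.snd) (Primrec.const 0)))
    (Primrec.const []))

theorem pr_chk (cd : Nat.Partrec.Code) {k j z d a n e : α → ℕ} (hk : Primrec k) (hj : Primrec j)
    (hz : Primrec z) (hd : Primrec d)
    (ha : Primrec a) (hn : Primrec n) (he : Primrec e) :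
    Primrec (fun x => chk cd (k x) (j x) (z x) (d x) (a x) (n x) (e x)) := by
  have hp : Primrec (fun x => Nat.pair (2 * z x) (d x)) :=
    Primrec₂.natPair.comp (Primrec.nat_mul.comp (Primrec.const 2) hz) hd
  refine Primrec.ite (PrimrecPred.and (PrimrecPred.and (pr_rvalid.comp hp) ?_) ?_)
    (Primrec.option_some.comp ((pr_fresh cd).comp hk)) (Primrec.const none)
  · exact Primrec.eq.comp (pr_ridx.comp hp) he
  · exact Primrec.nat_lt.comp (Primrec.nat_mul.comp (pr_pow.comp (Primrec.const 2) hj) hz)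
      (Primrec.nat_mul.comp hd (pr_asum cd hk hj ha hn))
end

/-- Search step; `w` codes `(k, j, m, z, d)`. -/
def srch (cd : Nat.Partrec.Code) (g : ℕ → ℚ) (b : List Bool) (w : ℕ) : Option (List Bool) :=
  chk cd w.unpair.1 w.unpair.2.unpair.1 w.unpair.2.unpair.2.unpair.2.unpair.1
    w.unpair.2.unpair.2.unpair.2.unpair.2 (bval b + 1) b.length
    (@Encodable.encode ℚ Primcodable.toEncodable (g w.unpair.2.unpair.2.unpair.1))

theorem co_srch (cd : Nat.Partrec.Code) (g : ℕ → ℚ) (hg : Computable g) :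
    Computable₂ (srch cd g) := by
  have L : Primrec (fun w : ℕ => w.unpair.1) := Primrec.fst.comp Primrec.unpair
  have R : Primrec (fun w : ℕ => w.unpair.2) := Primrec.snd.comp Primrec.unpair
  have W : Primrec (fun p : (List Bool × ℕ) × ℕ => p.1.2) := Primrec.snd.comp Primrec.fst
  have B : Primrec (fun p : (List Bool × ℕ) × ℕ => p.1.1) := Primrec.fst.comp Primrec.fst
  have B1 : Primrec (fun p : (List Bool × ℕ) × ℕ => bval p.1.1 + 1) :=
    Primrec.succ.comp (pr_bval.comp B)
  have B2 : Primrec (fun p : (List Bool × ℕ) × ℕ => p.1.1.length) :=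
    Primrec.list_length.comp B
  have P := pr_chk (α := (List Bool × ℕ) × ℕ) cd (L.comp W) (L.comp (R.comp W))
    (L.comp (R.comp (R.comp (R.comp W)))) (R.comp (R.comp (R.comp (R.comp W))))
    B1 B2 Primrec.snd
  have M : Primrec (fun p : List Bool × ℕ => p.2.unpair.2.unpair.2.unpair.1) :=
    L.comp (R.comp (R.comp Primrec.snd))
  have G0 : Computable (fun p : List Bool × ℕ => @Encodable.encode ℚ Primcodable.toEncodable
      (g p.2.unpair.2.unpair.2.unpair.1)) :=
    Computable.encode.comp (hg.comp M.to_comp)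
  have G : Computable (fun p : List Bool × ℕ => (p, @Encodable.encode ℚ Primcodable.toEncodable
      (g p.2.unpair.2.unpair.2.unpair.1))) :=
    Computable.pair Computable.id G0
  have Q := P.to_comp.comp G
  refine Q.of_eq fun p => ?_
  simp only [srch]

/-- weight -/
noncomputable def wt (x : ℝ) (p : List Bool) : ℝ := (2 : ℝ) ^ (-(p.length : ℝ) / x)

theorem apx_cond (j a n l N : ℕ) (ha : 0 < a) :
    (N + 1) ^ a * 2 ^ (l * 2 ^ n) ≤ 2 ^ (j * a) ↔
      ((N + 1 : ℕ) : ℝ) ≤ 2 ^ j * (2 : ℝ) ^ (-(l : ℝ) / ((a : ℝ) / 2 ^ n)) := by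
  have hy : ((2 : ℝ) ^ (-(l : ℝ) / ((a : ℝ) / 2 ^ n))) ^ a = ((2 : ℝ) ^ (l * 2 ^ n))⁻¹ := by
    rw [← Real.rpow_natCast, ← Real.rpow_mul (by norm_num), ← Real.rpow_natCast 2 (l * 2 ^ n),
      ← Real.rpow_neg (by norm_num)]
    congr 1
    have : (a : ℝ) ≠ 0 := by positivity
    push_cast
    field_simp
  have h2 := pow_le_pow_iff_left₀ (n := a) (a := ((N + 1 : ℕ) : ℝ))
    (b := 2 ^ j * (2 : ℝ) ^ (-(l : ℝ) / ((a : ℝ) / 2 ^ n))) (by positivity) (by positivity) ha.ne'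
  rw [← h2, mul_pow, hy,
    ← pow_mul, ← div_eq_mul_inv, le_div_iff₀ (by positivity)]
  exact_mod_cast Iff.rfl

theorem apx_floor (j a n l : ℕ) (ha : 0 < a) :
    apx j a n l = ⌊(2 : ℝ) ^ j * (2 : ℝ) ^ (-(l : ℝ) / ((a : ℝ) / 2 ^ n))⌋₊ := by
  unfold apx
  simp only [apx_cond _ _ _ _ _ ha]
  set Y := (2 : ℝ) ^ j * (2 : ℝ) ^ (-(l : ℝ) / ((a : ℝ) / 2 ^ n)) with hY
  have hY0 : 0 ≤ Y := by positivity
  have hY1 : Y ≤ ((2 ^ j : ℕ) : ℝ) := by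
    have : (2 : ℝ) ^ (-(l : ℝ) / ((a : ℝ) / 2 ^ n)) ≤ 1 := by
      apply Real.rpow_le_one_of_one_le_of_nonpos (by norm_num)
      apply div_nonpos_of_nonpos_of_nonneg
      · simp
      · positivity
    push_cast
    calc Y ≤ 2 ^ j * 1 := by rw [hY]; gcongr
      _ = _ := by ring
  have hF : ⌊Y⌋₊ ≤ 2 ^ j := Nat.floor_le_of_le hY1
  rw [Finset.sum_boole]
  have : (Finset.range (2 ^ j)).filter (fun N => ((N + 1 : ℕ) : ℝ) ≤ Y) = Finset.range ⌊Y⌋₊ := by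
    ext N
    simp only [Finset.mem_filter, Finset.mem_range]
    rw [← Nat.le_floor_iff hY0]
    omega
  rw [this]; simp

def Dk (cd : Nat.Partrec.Code) (k : ℕ) : Finset (List Bool) :=
  ((Finset.range k).filter (good cd k)).image prg

theorem prg_spec {cd : Nat.Partrec.Code} {k i : ℕ} (h : good cd k i) :
    Encodable.encode (prg i) = i := by
  obtain ⟨p, hp⟩ := Option.isSome_iff_exists.1 h.1
  rw [prg, hp]
  exact Encodable.mem_decode₂.1 hp

theorem asum_eq (cd : Nat.Partrec.Code) (k j a n : ℕ) :
    asum cd k j a n = ∑ p ∈ Dk cd k, apx j a n p.length := by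
  rw [Dk, Finset.sum_image, Finset.sum_filter, asum]
  intro i hi i' hi' h
  simp only [Finset.coe_filter, Set.mem_ofPred_eq] at hi hi'
  rw [← prg_spec hi.2, ← prg_spec hi'.2, h]

def IsCode (U : Computer) (cd : Nat.Partrec.Code) : Prop :=
  cd.eval = fun n => Part.bind ↑(Encodable.decode (α := List Bool) n) fun a => (U.f a).map Encodable.encode

theorem Dk_mem {U : Computer} {cd : Nat.Partrec.Code} (h : IsCode U cd) {k : ℕ} {p : List Bool}
    (hp : p ∈ Dk cd k) : p ∈ U.domain ∧ fresh cd k ∉ U.f p := by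
  simp only [Dk, Finset.mem_image, Finset.mem_filter, Finset.mem_range] at hp
  obtain ⟨i, ⟨hik, hg⟩, rfl⟩ := hp
  have he := prg_spec hg
  obtain ⟨v, hv⟩ := Option.isSome_iff_exists.1 hg.2
  have hv' : v ∈ cd.eval i := Nat.Partrec.Code.evaln_sound hv
  rw [h, ← he] at hv'
  simp only [Encodable.encodek, Part.coe_some, Part.bind_some, Part.mem_map_iff] at hv'
  obtain ⟨s, hs, rfl⟩ := hv'
  refine ⟨Part.dom_iff_mem.2 ⟨s, hs⟩, fun hf => ?_⟩
  have := Part.mem_unique hf hs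
  have hl : (fresh cd k).length = s.length := by rw [this]
  have h2 : outlen cd k i ≤ ∑ i ∈ Finset.range k, outlen cd k i :=
    Finset.single_le_sum (f := outlen cd k) (fun _ _ => Nat.zero_le _) (Finset.mem_range.2 hik)
  have h3 : outlen cd k i = s.length := by simp [outlen, hv]
  simp [fresh] at hl
  omega

theorem Dk_complete {U : Computer} {cd : Nat.Partrec.Code} (h : IsCode U cd)
    (F : Finset (List Bool)) (hF : ∀ p ∈ F, p ∈ U.domain) : ∃ k, F ⊆ Dk cd k := by
  have key : ∀ p, ∃ k, p ∈ F → ∀ k' ≥ k, p ∈ Dk cd k' := by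
    intro p
    by_cases hp : p ∈ F
    · obtain ⟨s, hs⟩ := Part.dom_iff_mem.1 (hF p hp)
      have : Encodable.encode s ∈ cd.eval (Encodable.encode p) := by
        rw [h]; simp only [Encodable.encodek, Part.coe_some, Part.bind_some]
        exact Part.mem_map _ hs
      obtain ⟨k, hk⟩ := Nat.Partrec.Code.evaln_complete.1 this
      refine ⟨k, fun _ k' hk' => ?_⟩
      have hk2 := Nat.Partrec.Code.evaln_mono hk' hk
      simp only [Dk, Finset.mem_image, Finset.mem_filter, Finset.mem_range]
      refine ⟨Encodable.encode p, ⟨Nat.Partrec.Code.evaln_bound hk2, ?_, ?_⟩, ?_⟩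
      · simp [Encodable.decode₂_encode]
      · rw [Option.mem_def.1 hk2]; rfl
      · simp [prg, Encodable.decode₂_encode]
    · exact ⟨0, fun h => absurd h hp⟩
  choose K hK using key
  exact ⟨F.sup K, fun p hp => hK p hp _ (Finset.le_sup hp)⟩

theorem chk_sound {cd : Nat.Partrec.Code} {g : ℕ → ℚ} {b s : List Bool} {w : ℕ}
    (h : s ∈ srch cd g b w) : ∃ k m, s = fresh cd k ∧
      (g m : ℝ) < ∑ p ∈ Dk cd k, wt (((bval b + 1 : ℕ) : ℝ) / 2 ^ b.length) p := by
  rw [srch, chk] at h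
  split_ifs at h with hc
  · obtain ⟨⟨h1, h2⟩, h3⟩ := hc
    refine ⟨_, w.unpair.2.unpair.2.unpair.1, (Option.some_inj.1 h).symm, ?_⟩
    obtain ⟨hd, hq⟩ := rat_enc_inj _ _ _ h1 h2
    rw [hq]
    rw [asum_eq] at h3
    generalize w.unpair.2.unpair.1 = j at *
    generalize w.unpair.2.unpair.2.unpair.2.unpair.1 = z at *
    generalize w.unpair.2.unpair.2.unpair.2.unpair.2 = d at *
    rw [div_lt_iff₀ (by exact_mod_cast hd)]
    have h4 : (2 : ℝ) ^ j * z < d * ∑ p ∈ Dk cd w.unpair.1, (apx j (bval b + 1) b.length p.length : ℝ) := by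
      exact_mod_cast h3
    have h5 : ∑ p ∈ Dk cd w.unpair.1, (apx j (bval b + 1) b.length p.length : ℝ) ≤
        2 ^ j * ∑ p ∈ Dk cd w.unpair.1, wt (((bval b + 1 : ℕ) : ℝ) / 2 ^ b.length) p := by
      rw [Finset.mul_sum]
      refine Finset.sum_le_sum fun p _ => ?_
      rw [apx_floor _ _ _ _ (Nat.succ_pos _)]
      exact Nat.floor_le (by positivity)
    have h6 : (2 : ℝ) ^ j * z < 2 ^ j * ((∑ p ∈ Dk cd w.unpair.1, wt (((bval b + 1 : ℕ) : ℝ) / 2 ^ b.length) p) * d) := by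
      calc _ < _ := h4
        _ ≤ d * _ := mul_le_mul_of_nonneg_left h5 (by positivity)
        _ = _ := by ring
    exact lt_of_mul_lt_mul_left h6 (by positivity)
  · simp at h

theorem chk_complete {U : Computer} {cd : Nat.Partrec.Code} (hcd : IsCode U cd) {g : ℕ → ℚ}
    {b : List Bool} {F : Finset (List Bool)} (hF : ∀ p ∈ F, p ∈ U.domain) {m : ℕ} (hm : 0 ≤ g m)
    (h : (g m : ℝ) < ∑ p ∈ F, wt (((bval b + 1 : ℕ) : ℝ) / 2 ^ b.length) p) :
    ∃ w s, s ∈ srch cd g b w := by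
  obtain ⟨k, hk⟩ := Dk_complete hcd F hF
  obtain ⟨z, d, h1, h2⟩ := rat_enc_ex (g m) hm
  obtain ⟨hd, hq⟩ := rat_enc_inj _ _ _ h1 h2
  have h3 : (g m : ℝ) < ∑ p ∈ Dk cd k, wt (((bval b + 1 : ℕ) : ℝ) / 2 ^ b.length) p :=
    h.trans_le (Finset.sum_le_sum_of_subset_of_nonneg hk fun p _ _ => by unfold wt; positivity)
  set S := ∑ p ∈ Dk cd k, wt (((bval b + 1 : ℕ) : ℝ) / 2 ^ b.length) p with hS
  obtain ⟨j, hj⟩ := pow_unbounded_of_one_lt (((Dk cd k).card : ℝ) / (S - g m)) (one_lt_two (α := ℝ))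
  rw [div_lt_iff₀ (by linarith)] at hj
  refine ⟨Nat.pair k (Nat.pair j (Nat.pair m (Nat.pair z d))), fresh cd k, ?_⟩
  simp only [srch, chk, Nat.unpair_pair]
  rw [if_pos]; · rfl
  refine ⟨⟨h1, h2⟩, ?_⟩
  rw [asum_eq]
  have h5 : 2 ^ j * S - (Dk cd k).card ≤
      ∑ p ∈ Dk cd k, (apx j (bval b + 1) b.length p.length : ℝ) := by
    rw [hS, Finset.mul_sum, Finset.card_eq_sum_ones]
    push_cast
    rw [← Finset.sum_sub_distrib]
    refine Finset.sum_le_sum fun p _ => ?_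
    rw [apx_floor _ _ _ _ (Nat.succ_pos _)]
    have := Nat.lt_floor_add_one
      ((2 : ℝ) ^ j * wt (((bval b + 1 : ℕ) : ℝ) / 2 ^ b.length) p)
    unfold wt at this ⊢
    push_cast at this ⊢
    linarith
  have hd' : (0 : ℝ) < d := by exact_mod_cast hd
  have h6 : (2 : ℝ) ^ j * z < d * ∑ p ∈ Dk cd k, (apx j (bval b + 1) b.length p.length : ℝ) := by
    have : (z : ℝ) = d * g m := by rw [hq]; field_simp
    rw [this]
    calc (2 : ℝ) ^ j * (d * g m) = d * (2 ^ j * g m) := by ring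
      _ < d * _ := mul_lt_mul_of_pos_left (by linarith) hd'
  exact_mod_cast h6

theorem search_exists (U : Computer) (g : ℕ → ℚ) (hg : Computable g) :
    ∃ C : Computer, ∀ p b : List Bool, b ∈ U.f p →
      (∀ s ∈ C.f p, ∃ (D : Finset (List Bool)) (m : ℕ), (∀ q ∈ D, q ∈ U.domain) ∧
        (∀ q ∈ D, s ∉ U.f q) ∧
        (g m : ℝ) < ∑ q ∈ D, wt (((bval b + 1 : ℕ) : ℝ) / 2 ^ b.length) q) ∧
      ((∃ (D : Finset (List Bool)) (m : ℕ), (∀ q ∈ D, q ∈ U.domain) ∧ 0 ≤ g m ∧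
        (g m : ℝ) < ∑ q ∈ D, wt (((bval b + 1 : ℕ) : ℝ) / 2 ^ b.length) q) → (C.f p).Dom) := by
  obtain ⟨cd, hcd⟩ := Nat.Partrec.Code.exists_code.1 U.partrec
  have hcd : IsCode U cd := hcd
  refine ⟨⟨fun p => (U.f p).bind fun b => Nat.rfindOpt (srch cd g b), ?_, ?_⟩, ?_⟩
  · exact U.partrec.bind ((Partrec.rfindOpt (co_srch cd g hg)).comp Computable.snd)
  · intro p hp q hq hpq
    exact U.prefixFree p (Part.dom_iff_mem.2 ⟨_, (Part.mem_bind_iff.1 (Part.get_mem hp)).choose_spec.1⟩) q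
      (Part.dom_iff_mem.2 ⟨_, (Part.mem_bind_iff.1 (Part.get_mem hq)).choose_spec.1⟩) hpq
  · intro p b hb
    constructor
    · intro s hs
      obtain ⟨b', hb', hs⟩ := Part.mem_bind_iff.1 hs
      obtain rfl := Part.mem_unique hb hb'
      obtain ⟨w, hw⟩ := Nat.rfindOpt_spec hs
      obtain ⟨k, m, rfl, hlt⟩ := chk_sound hw
      exact ⟨Dk cd k, m, fun q hq => (Dk_mem hcd hq).1, fun q hq => (Dk_mem hcd hq).2, hlt⟩
    · rintro ⟨D, m, hD, hm, hlt⟩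
      have := Nat.rfindOpt_dom.2 (chk_complete hcd hD hm hlt)
      exact Part.dom_iff_mem.2 ⟨_, Part.mem_bind_iff.2 ⟨b, hb, Part.get_mem this⟩⟩

theorem bits_length (T : ℝ) (n : ℕ) : (bits T n).length = n := by simp [bits]

theorem bval_bits (T : ℝ) (h0 : 0 < T) (h1 : T < 1) (n : ℕ) :
    (bval (bits T n) : ℤ) = ⌊T * 2 ^ n⌋ := by
  have hfr : Int.fract T = T := Int.fract_eq_self.2 ⟨h0.le, h1⟩
  induction n with
  | zero =>
    have : ⌊T⌋ = 0 := Int.floor_eq_zero_iff.2 ⟨h0.le, h1⟩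
    simp [bits, bval, this]
  | succ n ih =>
    have e : bits T (n + 1) = bits T n ++ [binDigit T (n + 1)] := by
      simp [bits, List.range_succ]
    have e2 : bval (bits T (n + 1)) = 2 * bval (bits T n) +
        (if binDigit T (n + 1) = true then 1 else 0) := by
      rw [e, bval, List.foldl_append]; rfl
    rw [e2]
    push_cast
    rw [ih]
    simp only [binDigit, hfr, decide_eq_true_eq]
    have h3 : ⌊T * 2 ^ n⌋ = ⌊T * 2 ^ (n + 1)⌋ / 2 := by
      have := Int.floor_div_natCast (T * 2 ^ (n + 1)) 2
      have h4 : T * 2 ^ (n + 1) / ((2 : ℕ) : ℝ) = T * 2 ^ n := by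
        rw [pow_succ]; push_cast; ring
      rw [h4] at this
      exact_mod_cast this
    rw [h3]
    split_ifs with h <;> omega

theorem kraft (S : Set (List Bool)) (hS : PrefixFree S) (D : Finset (List Bool))
    (hD : ∀ p ∈ D, p ∈ S) : ∑ p ∈ D, (1 / 2 : ℝ) ^ p.length ≤ 1 := by
  by_cases hn : ([] : List Bool) ∈ D
  · have : D = {[]} := by
      ext q
      simp only [Finset.mem_singleton]
      exact ⟨fun hq => (hS [] (hD _ hn) q (hD _ hq) List.nil_prefix).symm, fun h => h ▸ hn⟩
    rw [this]; simp
  · have hu : InformationTheory.UniquelyDecodable (D : Set (List Bool)) := by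
      intro L1
      induction L1 with
      | nil =>
        intro L2 _ h2 h
        cases L2 with
        | nil => rfl
        | cons q L2 =>
          simp at h
          have := h2 q (by simp)
          rw [h.1] at this
          exact absurd this hn
      | cons p L1 ih =>
        intro L2 h1 h2 h
        cases L2 with
        | nil =>
          simp at h
          have := h1 p (by simp)
          rw [h.1] at this
          exact absurd this hn
        | cons q L2 =>
          have hp := hD _ (h1 p (by simp))
          have hq := hD _ (h2 q (by simp))
          simp only [List.flatten_cons] at h
          have hpq : p = q := by
            have e1 : p <+: p ++ L1.flatten := List.prefix_append _ _
            have e2 : q <+: p ++ L1.flatten := h ▸ List.prefix_append _ _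
            rcases List.prefix_or_prefix_of_prefix e1 e2 with h | h
            · exact hS p hp q hq h
            · exact (hS q hq p hp h).symm
          subst hpq
          rw [ih L2 (fun w hw => h1 w (by simp [hw])) (fun w hw => h2 w (by simp [hw]))
            (List.append_cancel_left h)]
    have := InformationTheory.kraft_mcmillan_inequality hu
    simpa using this

theorem wt_pos (x : ℝ) (p : List Bool) : 0 < wt x p := by unfold wt; positivity

theorem wt_mono {x y : ℝ} (hx : 0 < x) (hxy : x ≤ y) (p : List Bool) : wt x p ≤ wt y p := by
  unfold wt
  apply Real.rpow_le_rpow_of_exponent_le (by norm_num)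
  rw [neg_div, neg_div, neg_le_neg_iff]
  gcongr

theorem wt_one (p : List Bool) : wt 1 p = (1 / 2 : ℝ) ^ p.length := by
  unfold wt
  rw [div_one, Real.rpow_neg (by norm_num), Real.rpow_natCast, one_div, inv_pow]

theorem wt_summable (U : Computer) {x : ℝ} (hx : 0 < x) (hx1 : x ≤ 1) :
    Summable (fun p : U.domain => wt x p) := by
  refine summable_of_sum_le (f := fun p : U.domain => wt x p) (c := 1) (fun p => (wt_pos x p).le) ?_
  intro u
  calc ∑ p ∈ u, wt x p ≤ ∑ p ∈ u, (1 / 2 : ℝ) ^ (p : List Bool).length :=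
        Finset.sum_le_sum fun p _ => (wt_mono hx hx1 p).trans_eq (wt_one p)
    _ = ∑ p ∈ u.map (Function.Embedding.subtype _), (1 / 2 : ℝ) ^ p.length := by
        rw [Finset.sum_map]; rfl
    _ ≤ 1 := kraft U.domain U.prefixFree _ (by
        intro p hp
        simp only [Finset.mem_map] at hp
        obtain ⟨a, _, rfl⟩ := hp
        exact a.2)

/-- `l * 2^(-l * e)` is bounded. -/
theorem wt_diff {T t : ℝ} (hT : 0 < T) (hTt : T < t) (ht : t < 1) :
    ∃ K : ℝ, 0 < K ∧ ∀ x, T ≤ x → x ≤ t → ∀ p : List Bool,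
      wt x p - wt T p ≤ K * (x - T) * (1 / 2 : ℝ) ^ p.length := by
  have ht0 : 0 < t := hT.trans hTt
  set e := 1 / t - 1 with he
  have he0 : 0 < e := by rw [he, sub_pos]; exact one_lt_one_div ht0 ht
  have hl2 : 0 < Real.log 2 := Real.log_pos (by norm_num)
  refine ⟨(1 / e) / T ^ 2, by positivity, fun x hx hxt p => ?_⟩
  have hx0 : 0 < x := hT.trans_le hx
  obtain ⟨l, hl⟩ : ∃ l : ℝ, l = (p.length : ℝ) := ⟨_, rfl⟩
  have hl0 : 0 ≤ l := by rw [hl]; positivity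
  have h1 : wt x p - wt T p ≤ wt x p * (Real.log 2 * l * (1 / T - 1 / x)) := by
    have : wt T p = wt x p * Real.exp (-(Real.log 2 * l * (1 / T - 1 / x))) := by
      unfold wt
      rw [Real.rpow_def_of_pos (by norm_num), Real.rpow_def_of_pos (by norm_num), ← Real.exp_add]
      congr 1
      rw [← hl]; field_simp; ring
    rw [this]
    have h2 := Real.add_one_le_exp (-(Real.log 2 * l * (1 / T - 1 / x)))
    have h3 := wt_pos x p
    nlinarith
  have h2 : wt x p * (Real.log 2 * l) ≤ 1 / e * (1 / 2 : ℝ) ^ p.length := by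
    have h3 : wt t p = (1 / 2 : ℝ) ^ p.length * Real.exp (-(Real.log 2 * l * e)) := by
      rw [← wt_one]
      unfold wt
      rw [Real.rpow_def_of_pos (by norm_num), Real.rpow_def_of_pos (by norm_num), ← Real.exp_add]
      congr 1
      rw [← hl, he]; field_simp; ring
    have h4 : Real.exp (-(Real.log 2 * l * e)) * (Real.log 2 * l * e) ≤ 1 := by
      rw [Real.exp_neg, inv_mul_le_iff₀ (Real.exp_pos _), mul_one]
      linarith [Real.add_one_le_exp (Real.log 2 * l * e)]
    calc wt x p * (Real.log 2 * l) ≤ wt t p * (Real.log 2 * l) := by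
          gcongr; exact wt_mono hx0 hxt p
      _ = (1 / 2 : ℝ) ^ p.length * (1 / e) * (Real.exp (-(Real.log 2 * l * e)) * (Real.log 2 * l * e)) := by
          rw [h3]; field_simp
      _ ≤ (1 / 2 : ℝ) ^ p.length * (1 / e) * 1 := by gcongr
      _ = _ := by ring
  have h3 : 1 / T - 1 / x ≤ (x - T) / T ^ 2 := by
    rw [div_sub_div _ _ hT.ne' hx0.ne', one_mul, mul_one]
    apply div_le_div_of_nonneg_left (by linarith) (by positivity)
    nlinarith
  have h4 : 0 ≤ 1 / T - 1 / x := by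
    rw [sub_nonneg]; exact one_div_le_one_div_of_le hT hx
  calc _ ≤ _ := h1
    _ = (wt x p * (Real.log 2 * l)) * (1 / T - 1 / x) := by ring
    _ ≤ (1 / e * (1 / 2 : ℝ) ^ p.length) * ((x - T) / T ^ 2) := by
        apply mul_le_mul h2 h3 h4 (by positivity)
    _ = _ := by ring

theorem prog_exists (U : Computer) (hU : IsOptimal U) (s : List Bool) : ∃ p, s ∈ U.f p := by
  let C : Computer := ⟨fun p => if p = [] then Part.some s else Part.none, by
    have : Partrec (fun p : List Bool => ((if p = [] then some s else none : Option (List Bool)) : Part (List Bool))) :=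
      Computable.ofOption (Primrec.ite (Primrec.eq.comp Primrec.id (Primrec.const []))
        (Primrec.const (some s)) (Primrec.const none)).to_comp
    refine this.of_eq fun p => ?_
    split_ifs <;> rfl, by
    have : ∀ p : List Bool, (if p = [] then Part.some s else Part.none).Dom → p = [] := by
      intro p hp
      by_contra h
      rw [if_neg h] at hp
      exact hp
    intro p hp q hq _
    rw [this p hp, this q hq]⟩
  obtain ⟨d, hd⟩ := hU C
  have h0 : C.f [] = Part.some s := by simp [C]
  obtain ⟨p', _, h⟩ := hd [] (by rw [h0]; trivial)
  exact ⟨p', h s (by rw [h0]; exact Part.mem_some _)⟩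

theorem H_spec (U : Computer) (hU : IsOptimal U) (s : List Bool) :
    ∃ p, p.length = H U s ∧ s ∈ U.f p := by
  obtain ⟨p, hp⟩ := prog_exists U hU s
  exact Nat.sInf_mem (s := {n | ∃ p : List Bool, p.length = n ∧ s ∈ U.f p}) ⟨_, p, rfl, hp⟩

theorem exists_nonnil (U : Computer) (hU : IsOptimal U) : ∃ p ∈ U.domain, p ≠ [] := by
  obtain ⟨p, hp⟩ := prog_exists U hU []
  obtain ⟨q, hq⟩ := prog_exists U hU [true]
  by_cases h : p = []
  · refine ⟨q, Part.dom_iff_mem.2 ⟨_, hq⟩, ?_⟩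
    rintro rfl
    subst h
    exact absurd (Part.mem_unique hp hq) (by simp)
  · exact ⟨p, Part.dom_iff_mem.2 ⟨_, hp⟩, h⟩

theorem sum_le_Z (U : Computer) {x : ℝ} (hx : 0 < x) (hx1 : x ≤ 1) (E : Finset (List Bool))
    (hE : ∀ p ∈ E, p ∈ U.domain) : ∑ p ∈ E, wt x p ≤ ∑' p : U.domain, wt x p := by
  classical
  rw [← Finset.sum_subtype_of_mem (p := (· ∈ U.domain)) (wt x) hE]
  exact (wt_summable U hx hx1).sum_le_tsum _ fun p _ => (wt_pos x p).le

theorem exists_big (U : Computer) (hU : IsOptimal U) {T x : ℝ} (hT : 0 < T) (hx : T < x)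
    (hx1 : x ≤ 1) : ∃ D : Finset (List Bool), (∀ q ∈ D, q ∈ U.domain) ∧
      ∑' p : U.domain, wt T p < ∑ p ∈ D, wt x p := by
  obtain ⟨p0, hp0, hne⟩ := exists_nonnil U hU
  have hs := wt_summable U (hT.trans hx) hx1
  have hlt : ∑' p : U.domain, wt T p < ∑' p : U.domain, wt x p := by
    refine Summable.tsum_lt_tsum (i := ⟨p0, hp0⟩) (fun p => wt_mono hT hx.le p) ?_
      (wt_summable U hT (hx.le.trans hx1)) hs
    unfold wt
    apply Real.rpow_lt_rpow_of_exponent_lt (by norm_num)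
    rw [neg_div, neg_div, neg_lt_neg_iff]
    have : (0 : ℝ) < p0.length := by exact_mod_cast List.length_pos_iff.2 hne
    exact div_lt_div_of_pos_left this hT hx
  obtain ⟨u, hu⟩ := (hs.hasSum.eventually (lt_mem_nhds hlt)).exists
  refine ⟨u.map (Function.Embedding.subtype _), ?_, ?_⟩
  · intro p hp
    simp only [Finset.mem_map] at hp
    obtain ⟨a, _, rfl⟩ := hp
    exact a.2
  · rw [Finset.sum_map]; exact hu

/-- **Theorem (paper Thm 16).** For `T ∈ (0,1)`, if `Z(T)` is right-computable
then `T` is weakly Chaitin `T`-random: there is `c ∈ ℝ` with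
`T·n − c ≤ H(T_n)` for all `n ≥ 1`. -/
theorem rightComputable_Z_imp_weaklyChaitinRandom (U : Computer)
    (hU : IsOptimal U) (T : ℝ) (hT0 : 0 < T) (hT1 : T < 1)
    (hZ : RightComputable (∑' p, zterm U T p)) :
    ∃ c : ℝ, ∀ n : ℕ, 1 ≤ n → T * n - c ≤ (H U (bits T n) : ℝ) := by
  classical
  obtain ⟨g, hg, hgle, hglim⟩ := hZ
  have hZeq : ∑' p, zterm U T p = ∑' p : U.domain, wt T p := rfl
  rw [hZeq] at hgle hglim
  set Z := ∑' p : U.domain, wt T p with hZdef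
  have hZ0 : 0 ≤ Z := tsum_nonneg fun p => (wt_pos T p).le
  obtain ⟨C, hC⟩ := search_exists U g hg
  obtain ⟨d, hd⟩ := hU C
  obtain ⟨K, hK0, hK⟩ := wt_diff (t := (1 + T) / 2) hT0 (by linarith) (by linarith)
  obtain ⟨n0, hn0⟩ := exists_pow_lt_of_lt_one (show (0 : ℝ) < (1 - T) / 2 by linarith)
    (show (1 / 2 : ℝ) < 1 by norm_num)
  refine ⟨max (T * n0) (T * Real.logb 2 K + d), fun n _ => ?_⟩
  rcases lt_or_ge n n0 with hlt | hge
  · have h1 : T * (n : ℝ) ≤ T * n0 := by gcongr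
    have h2 := le_max_left (T * (n0 : ℝ)) (T * Real.logb 2 K + d)
    have h3 : (0 : ℝ) ≤ H U (bits T n) := by positivity
    linarith
  obtain ⟨p, hpl, hp⟩ := H_spec U hU (bits T n)
  obtain ⟨hs, hc⟩ := hC p _ hp
  rw [bits_length] at hs hc
  have hbv := bval_bits T hT0 hT1 n
  set b := bits T n
  set x : ℝ := ((bval b + 1 : ℕ) : ℝ) / 2 ^ n with hxdef
  have hfl : (bval b : ℝ) = (⌊T * 2 ^ n⌋ : ℝ) := by exact_mod_cast congrArg (Int.cast (R := ℝ)) hbv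
  have h2n : (0 : ℝ) < 2 ^ n := by positivity
  have hTx : T < x := by
    rw [hxdef, lt_div_iff₀ h2n]
    push_cast
    rw [hfl]
    exact Int.lt_floor_add_one _
  have hxT : x - T ≤ (1 / 2 : ℝ) ^ n := by
    rw [sub_le_iff_le_add, hxdef, div_le_iff₀ h2n]
    push_cast
    rw [hfl, add_mul, ← mul_pow]
    norm_num
    linarith [Int.floor_le (T * 2 ^ n)]
  have hpow : (1 / 2 : ℝ) ^ n ≤ (1 / 2 : ℝ) ^ n0 :=
    pow_le_pow_of_le_one (by norm_num) (by norm_num) hge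
  have hxt : x ≤ (1 + T) / 2 := by linarith
  obtain ⟨D0, hD0, hD0lt⟩ := exists_big U hU hT0 hTx (by linarith)
  obtain ⟨m, hm⟩ := (hglim.eventually (gt_mem_nhds hD0lt)).exists
  have hdom := hc ⟨D0, m, hD0, by exact_mod_cast hZ0.trans (hgle m), hm⟩
  obtain ⟨s, hsC⟩ := Part.dom_iff_mem.1 hdom
  obtain ⟨D, m', hD, hDs, hDlt⟩ := hs s hsC
  obtain ⟨p', hp'l, hp'⟩ := hd p hdom
  have hp's := hp' s hsC
  have hnot : p' ∉ D := fun h => hDs p' h hp's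
  have hle := sum_le_Z U hT0 hT1.le (insert p' D) (by
    intro q hq
    rcases Finset.mem_insert.1 hq with rfl | hq
    · exact Part.dom_iff_mem.2 ⟨s, hp's⟩
    · exact hD q hq)
  rw [Finset.sum_insert hnot, ← hZdef] at hle
  have hdiff : ∑ q ∈ D, wt x q - ∑ q ∈ D, wt T q ≤ K * (1 / 2 : ℝ) ^ n := by
    rw [← Finset.sum_sub_distrib]
    calc _ ≤ ∑ q ∈ D, K * (x - T) * (1 / 2 : ℝ) ^ q.length :=
          Finset.sum_le_sum fun q _ => hK x hTx.le hxt q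
      _ = K * (x - T) * ∑ q ∈ D, (1 / 2 : ℝ) ^ q.length := by rw [Finset.mul_sum]
      _ ≤ K * (x - T) * 1 := by
          have := kraft U.domain U.prefixFree D hD
          have h0 : 0 ≤ x - T := by linarith
          gcongr
      _ ≤ _ := by rw [mul_one]; gcongr
  have hfin : wt T p' < K * (1 / 2 : ℝ) ^ n := by linarith [hgle m']
  have hKn : K * (1 / 2 : ℝ) ^ n = (2 : ℝ) ^ (Real.logb 2 K - n) := by
    rw [Real.rpow_sub (by norm_num), Real.rpow_logb (by norm_num) (by norm_num) hK0,
      Real.rpow_natCast, one_div, inv_pow, div_eq_mul_inv]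
  rw [hKn, wt, Real.rpow_lt_rpow_left_iff (by norm_num), div_lt_iff₀ hT0] at hfin
  have hcast : (p'.length : ℝ) ≤ H U b + d := by
    rw [← hpl]; exact_mod_cast hp'l
  have h2 := le_max_right (T * (n0 : ℝ)) (T * Real.logb 2 K + d)
  nlinarith
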